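/- arXiv:1501.07532 — 7 statements merged into one kernel-verified Lean document; each statement's English description precedes it below -/
import Mathlib

section
/- For an admissible curve γ in G¹₃ and any x ∈ I, the vectors Q₂(x) and Q₃(x) are linearly dependent if and only if (𝒦²𝒯 − 𝒦𝒯° + 𝒯𝒦° − 𝒯³)(x) = 0. In particular, γ is of equiform AW(2)-type (Q₂ and Q₃ everywhere linearly dependent) if and only if 𝒦²𝒯 − 𝒦𝒯° + 𝒯𝒦° − 𝒯³ ≡ 0 on I. -/
noncomputable section

open Real

/-- Model of the pseudo-Galilean space `G¹₃` as `ℝ³`. -/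
abbrev V3 := ℝ × ℝ × ℝ

/-- The pseudo-Galilean scalar product on `ℝ³`. -/
def pgInner (u v : V3) : ℝ :=
  if u.1 ≠ 0 ∨ v.1 ≠ 0 then u.1 * v.1 else u.2.1 * v.2.1 - u.2.2 * v.2.2

/-- Curvature of the admissible curve `x ↦ (x, y x, z x)`. -/
def curv (y z : ℝ → ℝ) (x : ℝ) : ℝ :=
  Real.sqrt |(deriv (deriv y) x) ^ 2 - (deriv (deriv z) x) ^ 2|

/-- Torsion of the admissible curve `x ↦ (x, y x, z x)`. -/
def tors (y z : ℝ → ℝ) (x : ℝ) : ℝ :=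
  (deriv (deriv y) x * deriv (deriv (deriv z)) x -
    deriv (deriv (deriv y)) x * deriv (deriv z) x) / (curv y z x) ^ 2

/-- Radius of curvature `ρ = 1/κ`. -/
def rho (y z : ℝ → ℝ) (x : ℝ) : ℝ := 1 / curv y z x

/-- Equiform curvature `𝒦 = ρ'`. -/
def eqK (y z : ℝ → ℝ) (x : ℝ) : ℝ := deriv (rho y z) x

/-- Equiform torsion `𝒯 = ρ·τ`. -/
def eqT (y z : ℝ → ℝ) (x : ℝ) : ℝ := rho y z x * tors y z x

/-- Frenet tangent `e₁ = (1, y', z')`. -/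
def e1 (y z : ℝ → ℝ) (x : ℝ) : V3 := (1, deriv y x, deriv z x)

/-- Frenet principal normal `e₂ = (1/κ)(0, y'', z'')`. -/
def e2 (y z : ℝ → ℝ) (x : ℝ) : V3 :=
  (0, deriv (deriv y) x / curv y z x, deriv (deriv z) x / curv y z x)

/-- Frenet binormal `e₃ = (1/κ)(0, ε·z'', ε·y'')`. -/
def e3 (y z : ℝ → ℝ) (ε : ℝ) (x : ℝ) : V3 :=
  (0, ε * deriv (deriv z) x / curv y z x, ε * deriv (deriv y) x / curv y z x)

/-- Equiform tangent `T = ρ·e₁`. -/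
def Tv (y z : ℝ → ℝ) (x : ℝ) : V3 := rho y z x • e1 y z x

/-- Equiform principal normal `N = ρ·e₂`. -/
def Nv (y z : ℝ → ℝ) (x : ℝ) : V3 := rho y z x • e2 y z x

/-- Equiform binormal `B = ρ·e₃`. -/
def Bv (y z : ℝ → ℝ) (ε : ℝ) (x : ℝ) : V3 := rho y z x • e3 y z ε x

/-- Derivative with respect to the equiform parameter: `f° = ρ·f'`. -/
def eqD {E : Type*} [NormedAddCommGroup E] [NormedSpace ℝ E]
    (y z : ℝ → ℝ) (f : ℝ → E) (x : ℝ) : E := rho y z x • deriv f x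

/-- `Q₁ = ρ⁻²·N`. -/
def Q1 (y z : ℝ → ℝ) (x : ℝ) : V3 := ((rho y z x) ^ (-2 : ℤ)) • Nv y z x

/-- `Q₂ = ρ⁻³·(−𝒦N + 𝒯B)`. -/
def Q2 (y z : ℝ → ℝ) (ε : ℝ) (x : ℝ) : V3 :=
  ((rho y z x) ^ (-3 : ℤ)) • ((-(eqK y z x)) • Nv y z x + (eqT y z x) • Bv y z ε x)

/-- `Q₃ = ρ⁻⁴·[(2𝒦² + 𝒯² − 𝒦°)N + (𝒯° − 3𝒦𝒯)B]`. -/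
def Q3 (y z : ℝ → ℝ) (ε : ℝ) (x : ℝ) : V3 :=
  ((rho y z x) ^ (-4 : ℤ)) •
    ((2 * (eqK y z x) ^ 2 + (eqT y z x) ^ 2 - eqD y z (eqK y z) x) • Nv y z x +
      (eqD y z (eqT y z) x - 3 * eqK y z x * eqT y z x) • Bv y z ε x)

theorem curv_ne_zero {y z : ℝ → ℝ} {x : ℝ}
    (h : (deriv (deriv y) x) ^ 2 - (deriv (deriv z) x) ^ 2 ≠ 0) : curv y z x ≠ 0 :=
  (Real.sqrt_pos.2 (abs_pos.2 h)).ne'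

theorem rho_ne_zero {y z : ℝ → ℝ} {x : ℝ}
    (h : (deriv (deriv y) x) ^ 2 - (deriv (deriv z) x) ^ 2 ≠ 0) : rho y z x ≠ 0 :=
  one_div_ne_zero (curv_ne_zero h)

theorem linearIndependent_Nv_Bv {y z : ℝ → ℝ} {ε x : ℝ} (hε : ε ≠ 0)
    (h : (deriv (deriv y) x) ^ 2 - (deriv (deriv z) x) ^ 2 ≠ 0) :
    LinearIndependent ℝ ![Nv y z x, Bv y z ε x] := by
  have hκ := curv_ne_zero h
  rw [Nv, Bv, LinearIndependent.pair_smul_iff (rho_ne_zero h), LinearIndependent.pair_iff]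
  intro s t hst
  simp only [e2, e3, Prod.smul_mk, Prod.mk_add_mk, smul_eq_mul, Prod.mk_eq_zero] at hst
  obtain ⟨-, h₁, h₂⟩ := hst
  field_simp at h₁ h₂
  constructor
  · refine (mul_eq_zero.1 ?_).resolve_right h
    linear_combination deriv (deriv y) x * h₁ - deriv (deriv z) x * h₂
  · refine (mul_eq_zero.1 ?_).resolve_right (mul_ne_zero hε h)
    linear_combination deriv (deriv y) x * h₂ - deriv (deriv z) x * h₁

theorem not_linearIndependent_Q2_Q3_iff {y z : ℝ → ℝ} {ε x : ℝ} (hε : ε ≠ 0)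
    (h : (deriv (deriv y) x) ^ 2 - (deriv (deriv z) x) ^ 2 ≠ 0) :
    ¬ LinearIndependent ℝ ![Q2 y z ε x, Q3 y z ε x] ↔
      (eqK y z x) ^ 2 * eqT y z x - eqK y z x * eqD y z (eqT y z) x +
        eqT y z x * eqD y z (eqK y z) x - (eqT y z x) ^ 3 = 0 := by
  have hρ := rho_ne_zero h
  have hc : rho y z x ^ (-3 : ℤ) * rho y z x ^ (-4 : ℤ) ≠ 0 :=
    mul_ne_zero (zpow_ne_zero _ hρ) (zpow_ne_zero _ hρ)
  simp only [Q2, Q3, smul_add, smul_smul]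
  rw [LinearIndependent.pair_add_smul_add_smul_iff, and_iff_right (linearIndependent_Nv_Bv hε h),
    not_not, ← sub_eq_zero, ← mul_eq_zero_iff_left (b := _ - eqT y z x ^ 3) hc]
  ring_nf

/-- `Q₂(x)` and `Q₃(x)` are linearly dependent iff
`(𝒦²𝒯 − 𝒦𝒯° + 𝒯𝒦° − 𝒯³)(x) = 0`; in particular `γ` is of equiform AW(2)-type iff
`𝒦²𝒯 − 𝒦𝒯° + 𝒯𝒦° − 𝒯³ ≡ 0` on `I`. -/
theorem pg_AW2_iff (I : Set ℝ) (y z : ℝ → ℝ) (ε : ℝ)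
    (hI : IsOpen I) (hy : ContDiff ℝ (⊤ : ℕ∞) y) (hz : ContDiff ℝ (⊤ : ℕ∞) z)
    (hadm : ∀ x ∈ I, (deriv (deriv y) x) ^ 2 - (deriv (deriv z) x) ^ 2 ≠ 0)
    (hε : ε = 1 ∨ ε = -1)
    (hsign : ∀ x ∈ I, 0 < ε * ((deriv (deriv y) x) ^ 2 - (deriv (deriv z) x) ^ 2)) :
    (∀ x ∈ I,
      (¬ LinearIndependent ℝ ![Q2 y z ε x, Q3 y z ε x] ↔
        (eqK y z x) ^ 2 * eqT y z x - eqK y z x * eqD y z (eqT y z) x +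
          eqT y z x * eqD y z (eqK y z) x - (eqT y z x) ^ 3 = 0)) ∧
    ((∀ x ∈ I, ¬ LinearIndependent ℝ ![Q2 y z ε x, Q3 y z ε x]) ↔
      (∀ x ∈ I,
        (eqK y z x) ^ 2 * eqT y z x - eqK y z x * eqD y z (eqT y z) x +
          eqT y z x * eqD y z (eqK y z) x - (eqT y z x) ^ 3 = 0)) := by
  have key := fun x hx ↦
    not_linearIndependent_Q2_Q3_iff (left_ne_zero_of_mul (hsign x hx).ne') (hadm x hx)
  exact ⟨key, forall₂_congr key⟩
end
end

section
/- Let γ be an admissible curve in G¹₃ with ε = +1 (i.e. y''² > z''² on I). Then the equiform AW(3) identity ⟨Q₁(x), Q₁(x)⟩·Q₃(x) = ⟨Q₃(x), Q₁(x)⟩·Q₁(x) holds for all x ∈ I (with ⟨·,·⟩ the pseudo-Galilean scalar product) if and only if 𝒯° − 3𝒦𝒯 ≡ 0 on I. -/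
noncomputable section

open Real

/-- The AW(3) identity for isotropic vectors `n = (0, a, b)` and `m = (0, b, a)` with `n` spacelike
says exactly that the `m`-component vanishes. -/
lemma pgInner_smul_eq_iff {a b : ℝ} (h : 0 < a ^ 2 - b ^ 2) {p q : ℝ} (hp : p ≠ 0) (hq : q ≠ 0)
    (A C : ℝ) :
    (pgInner (q • ((0, a, b) : V3)) (q • ((0, a, b) : V3))) •
        (p • (A • ((0, a, b) : V3) + C • ((0, b, a) : V3))) =
      (pgInner (p • (A • ((0, a, b) : V3) + C • ((0, b, a) : V3))) (q • ((0, a, b) : V3))) •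
        (q • ((0, a, b) : V3)) ↔ C = 0 := by
  have ha : a ≠ 0 := by
    rintro rfl
    nlinarith [sq_nonneg b]
  simp only [pgInner, Prod.smul_mk, Prod.mk_add_mk, smul_eq_mul, mul_zero, add_zero, ne_eq,
    not_true_eq_false, or_self, if_false, Prod.mk.injEq, true_and]
  constructor
  · rintro ⟨-, h₂⟩
    have hprod : (q ^ 2 * (a ^ 2 - b ^ 2) * p * a) * C = 0 := by linear_combination h₂
    exact (mul_eq_zero.mp hprod).resolve_left (by positivity)
  · rintro rfl
    constructor <;> ring

lemma Q1_eq_smul (y z : ℝ → ℝ) (x : ℝ) :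
    Q1 y z x = ((rho y z x) ^ (-2 : ℤ) * (rho y z x / curv y z x)) •
      ((0, deriv (deriv y) x, deriv (deriv z) x) : V3) := by
  simp only [Q1, Nv, e2, Prod.smul_mk, smul_eq_mul, Prod.mk.injEq]
  refine ⟨?_, ?_, ?_⟩ <;> ring

lemma Q3_one_eq_smul (y z : ℝ → ℝ) (x : ℝ) :
    Q3 y z 1 x = ((rho y z x) ^ (-4 : ℤ) * (rho y z x / curv y z x)) •
      ((2 * (eqK y z x) ^ 2 + (eqT y z x) ^ 2 - eqD y z (eqK y z) x) •
          ((0, deriv (deriv y) x, deriv (deriv z) x) : V3) +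
        (eqD y z (eqT y z) x - 3 * eqK y z x * eqT y z x) •
          ((0, deriv (deriv z) x, deriv (deriv y) x) : V3)) := by
  simp only [Q3, Nv, Bv, e2, e3, Prod.smul_mk, Prod.mk_add_mk, smul_eq_mul, Prod.mk.injEq]
  refine ⟨?_, ?_, ?_⟩ <;> ring

/-- for `ε = +1`, the equiform AW(3) identity
`⟨Q₁,Q₁⟩·Q₃ = ⟨Q₃,Q₁⟩·Q₁` holds on `I` iff `𝒯° − 3𝒦𝒯 ≡ 0` on `I`. -/
theorem pg_AW3_iff (I : Set ℝ) (y z : ℝ → ℝ)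
    (hI : IsOpen I) (hy : ContDiff ℝ (⊤ : ℕ∞) y) (hz : ContDiff ℝ (⊤ : ℕ∞) z)
    (hsign : ∀ x ∈ I, 0 < (deriv (deriv y) x) ^ 2 - (deriv (deriv z) x) ^ 2) :
    (∀ x ∈ I,
      (pgInner (Q1 y z x) (Q1 y z x)) • Q3 y z 1 x =
        (pgInner (Q3 y z 1 x) (Q1 y z x)) • Q1 y z x) ↔
      (∀ x ∈ I, eqD y z (eqT y z) x - 3 * eqK y z x * eqT y z x = 0) := by
  refine forall₂_congr fun x hx => ?_
  have hκ : curv y z x ≠ 0 := (Real.sqrt_pos.mpr (abs_pos.mpr (hsign x hx).ne')).ne'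
  have hρ : rho y z x ≠ 0 := one_div_ne_zero hκ
  rw [Q1_eq_smul, Q3_one_eq_smul]
  exact pgInner_smul_eq_iff (hsign x hx) (mul_ne_zero (zpow_ne_zero _ hρ) (div_ne_zero hρ hκ))
    (mul_ne_zero (zpow_ne_zero _ hρ) (div_ne_zero hρ hκ)) _ _
end
end

section
/- Let γ be an admissible curve in G¹₃ whose equiform curvature 𝒦 is a nonzero constant and whose equiform torsion 𝒯 is identically zero (an equiform isotropic logarithmic spiral). Then the equiform AW(2) identity ⟨Q₂(x), Q₂(x)⟩·Q₃(x) = ⟨Q₃(x), Q₂(x)⟩·Q₂(x) holds for all x ∈ I; in particular Q₂(x) and Q₃(x) are linearly dependent at every x, so γ is of equiform AW(2)-type. -/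
noncomputable section

open Real

/-- On isotropic vectors the scalar product is homogeneous in its first argument. -/
theorem pgInner_smul_left_of_fst_eq_zero {u v : V3} (hu : u.1 = 0) (hv : v.1 = 0) (a : ℝ) :
    pgInner (a • u) v = a * pgInner u v := by
  simp only [pgInner, Prod.smul_fst, Prod.smul_snd, smul_eq_mul, hu, hv, mul_zero, ne_eq,
    not_true_eq_false, or_self, if_false]
  ring

theorem Q2_fst (y z : ℝ → ℝ) (ε x : ℝ) : (Q2 y z ε x).1 = 0 := by
  simp [Q2, Nv, Bv, e2, e3]

theorem eqD_eq_zero_of_eqOn_const {I : Set ℝ} (hI : IsOpen I) (y z : ℝ → ℝ) {f : ℝ → ℝ} {c : ℝ}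
    (hf : ∀ x ∈ I, f x = c) {x : ℝ} (hx : x ∈ I) : eqD y z f x = 0 := by
  have h : f =ᶠ[nhds x] fun _ => c := Filter.eventually_of_mem (hI.mem_nhds hx) hf
  simp [eqD, h.deriv_eq]

/-- If `𝒦` is constant and `𝒯` vanishes, then `Q₃ = -2𝒦ρ⁻¹·Q₂`. -/
theorem Q3_eq_smul_Q2 {I : Set ℝ} (hI : IsOpen I) {y z : ℝ → ℝ} (ε : ℝ) {c : ℝ}
    (hK : ∀ x ∈ I, eqK y z x = c) (hT : ∀ x ∈ I, eqT y z x = 0) {x : ℝ} (hx : x ∈ I) :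
    Q3 y z ε x = (-2 * c * (rho y z x)⁻¹) • Q2 y z ε x := by
  have hpow : rho y z x ^ (-4 : ℤ) = (rho y z x)⁻¹ * rho y z x ^ (-3 : ℤ) := by
    simp only [zpow_neg, ← mul_inv]
    norm_cast
    rw [← pow_succ']
  simp only [Q2, Q3, eqD_eq_zero_of_eqOn_const hI y z hK hx,
    eqD_eq_zero_of_eqOn_const hI y z hT hx, hK x hx, hT x hx, hpow]
  module

/-- an equiform isotropic logarithmic spiral (`𝒦` a nonzero constant, `𝒯 ≡ 0`)
satisfies the equiform AW(2) identity, so `Q₂` and `Q₃` are everywhere linearly dependent. -/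
theorem pg_log_spiral_AW2 (I : Set ℝ) (y z : ℝ → ℝ) (ε : ℝ) (c : ℝ)
    (hI : IsOpen I) (hy : ContDiff ℝ (⊤ : ℕ∞) y) (hz : ContDiff ℝ (⊤ : ℕ∞) z)
    (hadm : ∀ x ∈ I, (deriv (deriv y) x) ^ 2 - (deriv (deriv z) x) ^ 2 ≠ 0)
    (hε : ε = 1 ∨ ε = -1)
    (hsign : ∀ x ∈ I, 0 < ε * ((deriv (deriv y) x) ^ 2 - (deriv (deriv z) x) ^ 2))
    (hc : c ≠ 0) (hK : ∀ x ∈ I, eqK y z x = c) (hT : ∀ x ∈ I, eqT y z x = 0) :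
    ∀ x ∈ I,
      (pgInner (Q2 y z ε x) (Q2 y z ε x)) • Q3 y z ε x =
        (pgInner (Q3 y z ε x) (Q2 y z ε x)) • Q2 y z ε x ∧
      ¬ LinearIndependent ℝ ![Q2 y z ε x, Q3 y z ε x] := by
  intro x hx
  have hQ := Q3_eq_smul_Q2 hI ε hK hT hx
  refine ⟨?_, fun hli => ?_⟩
  · rw [hQ, pgInner_smul_left_of_fst_eq_zero (Q2_fst y z ε x) (Q2_fst y z ε x)]
    module
  · have h := (LinearIndependent.pair_iff.1 hli) (-2 * c * (rho y z x)⁻¹) (-1)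
      (by rw [hQ]; module)
    exact neg_ne_zero.2 one_ne_zero h.2
end
end

section
/- Let γ be an admissible curve in G¹₃ whose equiform curvature 𝒦 is identically zero and whose equiform torsion 𝒯 is a nonzero constant (an equiform Bertrand curve). Then for every x ∈ I, Q₃(x) lies in the linear span of N(x) (so γ is of weak equiform AW(3)-type), but Q₃(x) does not lie in the linear span of B(x) for any x (so γ is not of weak equiform AW(2)-type). -/
noncomputable section

open Real

/-- On an open set where `𝒦 = 0` and `𝒯` is constant, `Q₃ = ρ⁻⁴𝒯²·N`. -/
theorem Q3_eq_smul_Nv {I : Set ℝ} {y z : ℝ → ℝ} {c : ℝ} (ε : ℝ) (hI : IsOpen I)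
    (hK : ∀ x ∈ I, eqK y z x = 0) (hT : ∀ x ∈ I, eqT y z x = c) {x : ℝ} (hx : x ∈ I) :
    Q3 y z ε x = (rho y z x ^ (-4 : ℤ) * c ^ 2) • Nv y z x := by
  have hK' : deriv (eqK y z) x = 0 := by
    rw [((Set.EqOn.eventuallyEq_of_mem (g := fun _ => (0 : ℝ)) hK (hI.mem_nhds hx))).deriv_eq,
      deriv_const]
  have hT' : deriv (eqT y z) x = 0 := by
    rw [((Set.EqOn.eventuallyEq_of_mem (g := fun _ => c) hT (hI.mem_nhds hx))).deriv_eq,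
      deriv_const]
  simp [Q3, eqD, hK', hT', hK x hx, hT x hx, mul_smul]

/-- At an admissible point the radius of curvature is positive. -/
theorem rho_pos {y z : ℝ → ℝ} {x : ℝ}
    (hadm : (deriv (deriv y) x) ^ 2 - (deriv (deriv z) x) ^ 2 ≠ 0) : 0 < rho y z x :=
  one_div_pos.mpr (Real.sqrt_pos.mpr (abs_pos.mpr hadm))

/-- At an admissible point no nonzero multiple of `N` is a multiple of `B`. -/
theorem smul_Nv_notMem_span_Bv {y z : ℝ → ℝ} {x k : ℝ} (ε : ℝ) (hk : k ≠ 0)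
    (hadm : (deriv (deriv y) x) ^ 2 - (deriv (deriv z) x) ^ 2 ≠ 0) :
    k • Nv y z x ∉ Submodule.span ℝ {Bv y z ε x} := by
  rw [Submodule.mem_span_singleton]
  rintro ⟨a, ha⟩
  have hρ : rho y z x ≠ 0 := (rho_pos hadm).ne'
  have hκ : curv y z x ≠ 0 := (Real.sqrt_pos.mpr (abs_pos.mpr hadm)).ne'
  rw [Bv, Nv, smul_comm a, smul_comm k] at ha
  have h := smul_right_injective V3 hρ ha
  simp only [e2, e3, Prod.smul_mk, smul_eq_mul, Prod.mk.injEq] at h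
  obtain ⟨-, h₁, h₂⟩ := h
  field_simp at h₁ h₂
  refine mul_ne_zero hk hadm ?_
  linear_combination -(deriv (deriv y) x) * h₁ + deriv (deriv z) x * h₂

/-- an equiform Bertrand curve (`𝒦 ≡ 0`, `𝒯` a nonzero constant) is of weak
equiform AW(3)-type (`Q₃ ∈ span{N}`) but not of weak equiform AW(2)-type (`Q₃ ∉ span{B}`). -/
theorem pg_bertrand_weak_AW_types (I : Set ℝ) (y z : ℝ → ℝ) (ε : ℝ) (c : ℝ)
    (hI : IsOpen I) (hy : ContDiff ℝ (⊤ : ℕ∞) y) (hz : ContDiff ℝ (⊤ : ℕ∞) z)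
    (hadm : ∀ x ∈ I, (deriv (deriv y) x) ^ 2 - (deriv (deriv z) x) ^ 2 ≠ 0)
    (hε : ε = 1 ∨ ε = -1)
    (hsign : ∀ x ∈ I, 0 < ε * ((deriv (deriv y) x) ^ 2 - (deriv (deriv z) x) ^ 2))
    (hc : c ≠ 0) (hK : ∀ x ∈ I, eqK y z x = 0) (hT : ∀ x ∈ I, eqT y z x = c) :
    ∀ x ∈ I,
      Q3 y z ε x ∈ Submodule.span ℝ {Nv y z x} ∧
      Q3 y z ε x ∉ Submodule.span ℝ {Bv y z ε x} := by
  intro x hx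
  rw [Q3_eq_smul_Nv ε hI hK hT hx]
  exact ⟨Submodule.smul_mem _ _ (Submodule.mem_span_singleton_self _),
    smul_Nv_notMem_span_Bv ε
      (mul_ne_zero (zpow_ne_zero _ (rho_pos (hadm x hx)).ne') (pow_ne_zero 2 hc)) (hadm x hx)⟩
end
end

section
/- Let γ be an admissible curve in G¹₃ whose equiform curvature 𝒦 is identically zero, and let λ : I → ℝ be smooth. Suppose the curve γ̄ = γ + λ·N is an equiform Bertrand mate of γ in the sense that for every x ∈ I the derivative (γ + λN)°(x) lies in the linear span of T(x) and B(x) (equivalently, its N-component λ(x)𝒦(x) + λ°(x) vanishes, which holds when the principal normals of γ̄ and γ are parallel). Then λ is constant on I. -/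
noncomputable section

open Real

/-- The radius of curvature normalizes the signed square of the acceleration:
`ρ² · ε(y''² − z''²) = 1`. -/
lemma rho_sq_mul_eq_one (y z : ℝ → ℝ) {ε x : ℝ} (hε : ε = 1 ∨ ε = -1)
    (h : 0 < ε * ((deriv (deriv y) x) ^ 2 - (deriv (deriv z) x) ^ 2)) :
    rho y z x ^ 2 * (ε * ((deriv (deriv y) x) ^ 2 - (deriv (deriv z) x) ^ 2)) = 1 := by
  have habs : |(deriv (deriv y) x) ^ 2 - (deriv (deriv z) x) ^ 2| =
      ε * ((deriv (deriv y) x) ^ 2 - (deriv (deriv z) x) ^ 2) := by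
    rw [← abs_of_pos h, abs_mul]
    rcases hε with rfl | rfl <;> simp
  rw [rho, curv, habs, div_pow, Real.sq_sqrt h.le, one_pow, one_div_mul_cancel h.ne']

lemma differentiableAt_rho {y z : ℝ → ℝ} {x : ℝ}
    (hy : DifferentiableAt ℝ (deriv (deriv y)) x) (hz : DifferentiableAt ℝ (deriv (deriv z)) x)
    (h : (deriv (deriv y) x) ^ 2 - (deriv (deriv z) x) ^ 2 ≠ 0) :
    DifferentiableAt ℝ (rho y z) x := by
  have hD : DifferentiableAt ℝ
      (fun t => |(deriv (deriv y) t) ^ 2 - (deriv (deriv z) t) ^ 2|) x :=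
    DifferentiableAt.abs ((hy.pow 2).sub (hz.pow 2)) h
  exact (differentiableAt_const 1).div (hD.sqrt (abs_ne_zero.mpr h))
    (Real.sqrt_ne_zero'.mpr (abs_pos.mpr h))

lemma differentiable_deriv_deriv {f : ℝ → ℝ} (hf : ContDiff ℝ (⊤ : ℕ∞) f) :
    Differentiable ℝ (deriv (deriv f)) := by
  have h1 : ContDiff ℝ (⊤ : ℕ∞) (deriv f) := (contDiff_infty_iff_deriv.mp hf).2
  have h2 : ContDiff ℝ (⊤ : ℕ∞) (deriv (deriv f)) := (contDiff_infty_iff_deriv.mp h1).2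
  exact (contDiff_infty_iff_deriv.mp h2).1

lemma Nv_eq (y z : ℝ → ℝ) (x : ℝ) :
    Nv y z x = (0, rho y z x ^ 2 * deriv (deriv y) x, rho y z x ^ 2 * deriv (deriv z) x) := by
  simp only [Nv, e2, rho, Prod.smul_mk, smul_eq_mul, Prod.mk.injEq]
  refine ⟨by ring, by ring, by ring⟩

/-- If `𝒦` vanishes at `x` and `(γ + λN)°(x)` lies in the span of `T(x)` and `B(x)`, then
`λ'(x) = 0`. -/
lemma deriv_eq_zero_of_eqD_mem_span {y z l : ℝ → ℝ} {ε x : ℝ}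
    (hy : ContDiff ℝ (⊤ : ℕ∞) y) (hz : ContDiff ℝ (⊤ : ℕ∞) z) (hl : DifferentiableAt ℝ l x)
    (hε : ε = 1 ∨ ε = -1)
    (hsign : 0 < ε * ((deriv (deriv y) x) ^ 2 - (deriv (deriv z) x) ^ 2))
    (hK : eqK y z x = 0)
    (hmate : eqD y z (fun t => ((t, y t, z t) : V3) + l t • Nv y z t) x ∈
        Submodule.span ℝ {Tv y z x, Bv y z ε x}) :
    deriv l x = 0 := by
  have hya := (differentiable_deriv_deriv hy x).hasDerivAt
  have hza := (differentiable_deriv_deriv hz x).hasDerivAt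
  have hadm := right_ne_zero_of_mul hsign.ne'
  have hρ : HasDerivAt (rho y z) 0 x :=
    hK ▸ (differentiableAt_rho hya.differentiableAt hza.differentiableAt hadm).hasDerivAt
  have hone := rho_sq_mul_eq_one y z hε hsign
  have hρ0 : rho y z x ≠ 0 := by
    intro h0
    simp [h0] at hone
  have hε0 : ε ≠ 0 := left_ne_zero_of_mul hsign.ne'
  have hnear : ∀ᶠ t in nhds x,
      0 < ε * ((deriv (deriv y) t) ^ 2 - (deriv (deriv z) t) ^ 2) :=
    (((hya.pow 2).sub (hza.pow 2)).const_mul ε).continuousAt.eventually_const_lt hsign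
  have horth : deriv (deriv y) x * deriv (deriv (deriv y)) x -
      deriv (deriv z) x * deriv (deriv (deriv z)) x = 0 := by
    have h1 := (hρ.pow 2).mul (((hya.pow 2).sub (hza.pow 2)).const_mul ε)
    have h2 := h1.unique ((hasDerivAt_const x (1 : ℝ)).congr_of_eventuallyEq
      (hnear.mono fun t ht => rho_sq_mul_eq_one y z hε ht))
    simp only [Pi.pow_apply, Pi.sub_apply] at h2
    have h3 : rho y z x ^ 2 * ε * 2 * (deriv (deriv y) x * deriv (deriv (deriv y)) x -
      deriv (deriv z) x * deriv (deriv (deriv z)) x) = 0 := by grind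
    simpa [hρ0, hε0] using h3
  have hN : ∀ {f : ℝ → ℝ} {f' : ℝ}, HasDerivAt f f' x →
      HasDerivAt (fun t => rho y z t ^ 2 * f t) (rho y z x ^ 2 * f') x := fun hf =>
    ((hρ.pow 2).mul hf).congr_deriv (by simp)
  have hcurve : HasDerivAt (fun t => ((t, y t, z t) : V3) + l t • Nv y z t)
      (1, deriv y x + (deriv l x * (rho y z x ^ 2 * deriv (deriv y) x) +
          l x * (rho y z x ^ 2 * deriv (deriv (deriv y)) x)),
        deriv z x + (deriv l x * (rho y z x ^ 2 * deriv (deriv z) x) +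
          l x * (rho y z x ^ 2 * deriv (deriv (deriv z)) x))) x := by
    have hy1 := ((contDiff_infty_iff_deriv.mp hy).1 x).hasDerivAt
    have hz1 := ((contDiff_infty_iff_deriv.mp hz).1 x).hasDerivAt
    have h := (hasDerivAt_id x).prodMk ((hy1.add (hl.hasDerivAt.mul (hN hya))).prodMk
      (hz1.add (hl.hasDerivAt.mul (hN hza))))
    refine h.congr_of_eventuallyEq (Filter.Eventually.of_forall fun t => ?_)
    simp [Nv_eq]
  obtain ⟨α, β, hαβ⟩ := Submodule.mem_span_pair.mp hmate
  rw [eqD, hcurve.deriv] at hαβ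
  simp only [Tv, Bv, e1, e3, Prod.smul_mk, Prod.mk_add_mk, smul_eq_mul, Prod.mk.injEq] at hαβ
  obtain ⟨h1, h2, h3⟩ := hαβ
  have hα : α = 1 := mul_right_cancel₀ hρ0 (by linarith)
  subst hα
  have hfin : rho y z x ^ 3 * ((deriv (deriv y) x) ^ 2 - (deriv (deriv z) x) ^ 2) *
      deriv l x = 0 := by
    linear_combination deriv (deriv z) x * h3 - deriv (deriv y) x * h2 -
      rho y z x ^ 3 * l x * horth
  simpa [hρ0, hadm] using hfin

/-- if `𝒦 ≡ 0` and the equiform derivative of the Bertrand mate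
`γ̄ = γ + λ·N` lies in `span{T, B}` at every point, then `λ` is constant. -/
theorem pg_bertrand_lambda_constant (I : Set ℝ) (y z : ℝ → ℝ) (ε : ℝ) (l : ℝ → ℝ)
    (hI : IsOpen I) (hIconn : IsPreconnected I)
    (hy : ContDiff ℝ (⊤ : ℕ∞) y) (hz : ContDiff ℝ (⊤ : ℕ∞) z)
    (hadm : ∀ x ∈ I, (deriv (deriv y) x) ^ 2 - (deriv (deriv z) x) ^ 2 ≠ 0)
    (hε : ε = 1 ∨ ε = -1)
    (hsign : ∀ x ∈ I, 0 < ε * ((deriv (deriv y) x) ^ 2 - (deriv (deriv z) x) ^ 2))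
    (hl : ContDiff ℝ (⊤ : ℕ∞) l)
    (hK : ∀ x ∈ I, eqK y z x = 0)
    (hmate : ∀ x ∈ I,
      eqD y z (fun t => ((t, y t, z t) : V3) + l t • Nv y z t) x ∈
        Submodule.span ℝ {Tv y z x, Bv y z ε x}) :
    ∀ x ∈ I, ∀ x' ∈ I, l x = l x' := by
  have hderiv : ∀ x ∈ I, deriv l x = 0 := fun x hx =>
    deriv_eq_zero_of_eqD_mem_span hy hz ((contDiff_infty_iff_deriv.mp hl).1 x) hε (hsign x hx)
      (hK x hx) (hmate x hx)
  intro x hx x' hx'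
  exact hI.is_const_of_deriv_eq_zero hIconn (contDiff_infty_iff_deriv.mp hl).1.differentiableOn
    hderiv hx hx'
end
end

section
/- Let a, b ∈ ℝ with a ≠ 0, b ≠ 0 and a² ≠ b², and consider the curve r : ℝ → ℝ³ given by r(s) = (s, e^{−as}((a²+b²)cosh(bs) + 2ab·sinh(bs))/(a²−b²)², e^{−as}(2ab·cosh(bs) + (a²+b²)sinh(bs))/(a²−b²)²). Then r is an admissible curve in G¹₃ with y''(s) = e^{−as}cosh(bs) and z''(s) = e^{−as}sinh(bs), curvature κ(s) = e^{−as} and torsion τ(s) = b, and its equiform curvature and equiform torsion are 𝒦(s) = a·e^{as} and 𝒯(s) = b·e^{as}. -/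
noncomputable section

open Real

/-- Functions `e^{-at}(p cosh bt + q sinh bt)/d` are closed under differentiation. -/
theorem deriv_exp_mul_cosh_add_sinh_div (a b p q d : ℝ) :
    deriv (fun t => Real.exp (-(a * t)) *
        (p * Real.cosh (b * t) + q * Real.sinh (b * t)) / d) =
      fun t => Real.exp (-(a * t)) *
        ((b * q - a * p) * Real.cosh (b * t) + (b * p - a * q) * Real.sinh (b * t)) / d := by
  funext t
  have hlin (c : ℝ) : HasDerivAt (fun t : ℝ => c * t) c t := by
    simpa using (hasDerivAt_id t).const_mul c
  have h := (((hlin a).neg.exp).mul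
    (((hlin b).cosh.const_mul p).add ((hlin b).sinh.const_mul q))).div_const d
  refine h.deriv.trans ?_
  simp only [Pi.add_apply, Pi.neg_apply]
  ring

section Helix

variable {y z : ℝ → ℝ} {a b : ℝ}

theorem curv_eq_exp
    (hy : deriv (deriv y) = fun t => Real.exp (-(a * t)) * Real.cosh (b * t))
    (hz : deriv (deriv z) = fun t => Real.exp (-(a * t)) * Real.sinh (b * t)) (s : ℝ) :
    curv y z s = Real.exp (-(a * s)) := by
  have h : (Real.exp (-(a * s)) * Real.cosh (b * s)) ^ 2 -
      (Real.exp (-(a * s)) * Real.sinh (b * s)) ^ 2 = Real.exp (-(a * s)) ^ 2 := by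
    linear_combination Real.exp (-(a * s)) ^ 2 * Real.cosh_sq_sub_sinh_sq (b * s)
  rw [curv, hy, hz, h, abs_sq, Real.sqrt_sq (Real.exp_pos _).le]

theorem rho_eq_exp
    (hy : deriv (deriv y) = fun t => Real.exp (-(a * t)) * Real.cosh (b * t))
    (hz : deriv (deriv z) = fun t => Real.exp (-(a * t)) * Real.sinh (b * t)) :
    rho y z = fun t => Real.exp (a * t) := by
  funext s
  rw [rho, curv_eq_exp hy hz, Real.exp_neg, one_div, inv_inv]

theorem tors_eq_const
    (hy : deriv (deriv y) = fun t => Real.exp (-(a * t)) * Real.cosh (b * t))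
    (hz : deriv (deriv z) = fun t => Real.exp (-(a * t)) * Real.sinh (b * t)) (s : ℝ) :
    tors y z s = b := by
  have hy' := congrFun (deriv_exp_mul_cosh_add_sinh_div a b 1 0 1) s
  have hz' := congrFun (deriv_exp_mul_cosh_add_sinh_div a b 0 1 1) s
  simp only [one_mul, zero_mul, add_zero, zero_add, div_one, mul_one, mul_zero, zero_sub,
    sub_zero] at hy' hz'
  rw [tors, curv_eq_exp hy hz, hy, hz, hy', hz', div_eq_iff (pow_ne_zero 2 (Real.exp_ne_zero _))]
  linear_combination b * Real.exp (-(a * s)) ^ 2 * Real.cosh_sq_sub_sinh_sq (b * s)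

theorem eqK_eq_mul_exp
    (hy : deriv (deriv y) = fun t => Real.exp (-(a * t)) * Real.cosh (b * t))
    (hz : deriv (deriv z) = fun t => Real.exp (-(a * t)) * Real.sinh (b * t)) (s : ℝ) :
    eqK y z s = a * Real.exp (a * s) := by
  have h : HasDerivAt (fun t : ℝ => a * t) a s := by
    simpa using (hasDerivAt_id s).const_mul a
  rw [eqK, rho_eq_exp hy hz, h.exp.deriv, mul_comm]

end Helix

/-- the equiform timelike general helix of Example 1 is admissible, with
`y'' = e^{−as}cosh(bs)`, `z'' = e^{−as}sinh(bs)`, `κ = e^{−as}`, `τ = b`,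
`𝒦 = a·e^{as}` and `𝒯 = b·e^{as}`. -/
theorem pg_example1_general_helix (a b : ℝ) (ha : a ≠ 0) (hb : b ≠ 0) (hab : a ^ 2 ≠ b ^ 2) :
    ∀ s : ℝ,
      deriv (deriv (fun t => Real.exp (-(a * t)) *
        ((a ^ 2 + b ^ 2) * Real.cosh (b * t) + 2 * a * b * Real.sinh (b * t)) /
          (a ^ 2 - b ^ 2) ^ 2)) s = Real.exp (-(a * s)) * Real.cosh (b * s) ∧
      deriv (deriv (fun t => Real.exp (-(a * t)) *
        (2 * a * b * Real.cosh (b * t) + (a ^ 2 + b ^ 2) * Real.sinh (b * t)) /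
          (a ^ 2 - b ^ 2) ^ 2)) s = Real.exp (-(a * s)) * Real.sinh (b * s) ∧
      (deriv (deriv (fun t => Real.exp (-(a * t)) *
        ((a ^ 2 + b ^ 2) * Real.cosh (b * t) + 2 * a * b * Real.sinh (b * t)) /
          (a ^ 2 - b ^ 2) ^ 2)) s) ^ 2 -
      (deriv (deriv (fun t => Real.exp (-(a * t)) *
        (2 * a * b * Real.cosh (b * t) + (a ^ 2 + b ^ 2) * Real.sinh (b * t)) /
          (a ^ 2 - b ^ 2) ^ 2)) s) ^ 2 ≠ 0 ∧
      curv (fun t => Real.exp (-(a * t)) *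
          ((a ^ 2 + b ^ 2) * Real.cosh (b * t) + 2 * a * b * Real.sinh (b * t)) /
            (a ^ 2 - b ^ 2) ^ 2)
        (fun t => Real.exp (-(a * t)) *
          (2 * a * b * Real.cosh (b * t) + (a ^ 2 + b ^ 2) * Real.sinh (b * t)) /
            (a ^ 2 - b ^ 2) ^ 2) s = Real.exp (-(a * s)) ∧
      tors (fun t => Real.exp (-(a * t)) *
          ((a ^ 2 + b ^ 2) * Real.cosh (b * t) + 2 * a * b * Real.sinh (b * t)) /
            (a ^ 2 - b ^ 2) ^ 2)
        (fun t => Real.exp (-(a * t)) *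
          (2 * a * b * Real.cosh (b * t) + (a ^ 2 + b ^ 2) * Real.sinh (b * t)) /
            (a ^ 2 - b ^ 2) ^ 2) s = b ∧
      eqK (fun t => Real.exp (-(a * t)) *
          ((a ^ 2 + b ^ 2) * Real.cosh (b * t) + 2 * a * b * Real.sinh (b * t)) /
            (a ^ 2 - b ^ 2) ^ 2)
        (fun t => Real.exp (-(a * t)) *
          (2 * a * b * Real.cosh (b * t) + (a ^ 2 + b ^ 2) * Real.sinh (b * t)) /
            (a ^ 2 - b ^ 2) ^ 2) s = a * Real.exp (a * s) ∧
      eqT (fun t => Real.exp (-(a * t)) *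
          ((a ^ 2 + b ^ 2) * Real.cosh (b * t) + 2 * a * b * Real.sinh (b * t)) /
            (a ^ 2 - b ^ 2) ^ 2)
        (fun t => Real.exp (-(a * t)) *
          (2 * a * b * Real.cosh (b * t) + (a ^ 2 + b ^ 2) * Real.sinh (b * t)) /
            (a ^ 2 - b ^ 2) ^ 2) s = b * Real.exp (a * s) := by
  have hd : (a ^ 2 - b ^ 2) ^ 2 ≠ 0 := pow_ne_zero 2 (sub_ne_zero.mpr hab)
  intro s
  have hy : deriv (deriv (fun t => Real.exp (-(a * t)) *
      ((a ^ 2 + b ^ 2) * Real.cosh (b * t) + 2 * a * b * Real.sinh (b * t)) /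
        (a ^ 2 - b ^ 2) ^ 2)) = fun t => Real.exp (-(a * t)) * Real.cosh (b * t) := by
    rw [deriv_exp_mul_cosh_add_sinh_div, deriv_exp_mul_cosh_add_sinh_div]
    funext t
    rw [div_eq_iff hd]
    ring
  have hz : deriv (deriv (fun t => Real.exp (-(a * t)) *
      (2 * a * b * Real.cosh (b * t) + (a ^ 2 + b ^ 2) * Real.sinh (b * t)) /
        (a ^ 2 - b ^ 2) ^ 2)) = fun t => Real.exp (-(a * t)) * Real.sinh (b * t) := by
    rw [deriv_exp_mul_cosh_add_sinh_div, deriv_exp_mul_cosh_add_sinh_div]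
    funext t
    rw [div_eq_iff hd]
    ring
  refine ⟨congrFun hy s, congrFun hz s, ?_, curv_eq_exp hy hz s, tors_eq_const hy hz s,
    eqK_eq_mul_exp hy hz s, ?_⟩
  · intro h
    have hκ := curv_eq_exp hy hz s
    rw [curv, h, abs_zero, Real.sqrt_zero] at hκ
    exact Real.exp_ne_zero _ hκ.symm
  · rw [eqT, rho_eq_exp hy hz, tors_eq_const hy hz, mul_comm]
end
end

section
/- Let a, b ∈ ℝ with a ≠ 0, and let I = {s ∈ ℝ : as + b > 0}. The curve r : I → ℝ³ given by r(s) = (s, (as+b)(ln(as+b) − 1)/a², 0) (an equiform timelike isotropic logarithmic spiral) is an admissible curve in G¹₃ with curvature κ(s) = 1/(as+b) and torsion τ(s) = 0, and its equiform curvature and torsion are the constants 𝒦(s) = a and 𝒯(s) = 0. Consequently it satisfies the equiform AW(2) condition 𝒦²𝒯 − 𝒦𝒯° + 𝒯𝒦° − 𝒯³ ≡ 0 and the equiform AW(3) condition 𝒯° − 3𝒦𝒯 ≡ 0, but not the equiform AW(1) condition, since 2𝒦(s)² + 𝒯(s)² − 𝒦°(s) = 2a² ≠ 0 for all s ∈ I.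 -/
noncomputable section

open Real

/-- The nonconstant coordinate `y(t) = (at+b)(ln(at+b) − 1)/a²` of the logarithmic spiral. -/
def logSpiral (a b : ℝ) : ℝ → ℝ :=
  fun t => (a * t + b) * (Real.log (a * t + b) - 1) / a ^ 2

/-- The domain of the logarithmic spiral is a neighbourhood of each of its points. -/
lemma eventually_affine_pos {a b s : ℝ} (hs : 0 < a * s + b) :
    ∀ᶠ t in nhds s, 0 < a * t + b :=
  (show Continuous fun t : ℝ => a * t + b by fun_prop).continuousAt.eventually_const_lt hs

lemma hasDerivAt_affine (a b s : ℝ) : HasDerivAt (fun t : ℝ => a * t + b) a s := by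
  simpa using ((hasDerivAt_id s).const_mul a).add_const b

lemma deriv_logSpiral {a b s : ℝ} (ha : a ≠ 0) (hs : 0 < a * s + b) :
    deriv (logSpiral a b) s = Real.log (a * s + b) / a := by
  have h := hasDerivAt_affine a b s
  refine HasDerivAt.deriv (((h.mul ((h.log hs.ne').sub_const 1)).div_const (a ^ 2)).congr_deriv ?_)
  have := hs.ne'
  field_simp
  ring

lemma deriv_deriv_logSpiral {a b s : ℝ} (ha : a ≠ 0) (hs : 0 < a * s + b) :
    deriv (deriv (logSpiral a b)) s = 1 / (a * s + b) := by
  have heq : deriv (logSpiral a b) =ᶠ[nhds s] fun t => Real.log (a * t + b) / a :=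
    (eventually_affine_pos hs).mono fun t ht => deriv_logSpiral ha ht
  rw [heq.deriv_eq, (((hasDerivAt_affine a b s).log hs.ne').div_const a).deriv]
  field_simp

lemma curv_logSpiral {a b s : ℝ} (ha : a ≠ 0) (hs : 0 < a * s + b) :
    curv (logSpiral a b) (fun _ => 0) s = 1 / (a * s + b) := by
  have hpos : 0 ≤ 1 / (a * s + b) := by positivity
  simp only [curv, deriv_deriv_logSpiral ha hs, deriv_const']
  rw [zero_pow two_ne_zero, sub_zero, abs_of_nonneg (sq_nonneg _), Real.sqrt_sq hpos]

lemma rho_logSpiral {a b s : ℝ} (ha : a ≠ 0) (hs : 0 < a * s + b) :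
    rho (logSpiral a b) (fun _ => 0) s = a * s + b := by
  rw [rho, curv_logSpiral ha hs, one_div_one_div]

lemma eqK_logSpiral {a b s : ℝ} (ha : a ≠ 0) (hs : 0 < a * s + b) :
    eqK (logSpiral a b) (fun _ => 0) s = a := by
  have heq : rho (logSpiral a b) (fun _ => 0) =ᶠ[nhds s] fun t => a * t + b :=
    (eventually_affine_pos hs).mono fun t ht => rho_logSpiral ha ht
  rw [eqK, heq.deriv_eq, (hasDerivAt_affine a b s).deriv]

lemma eqD_eqK_logSpiral {a b s : ℝ} (ha : a ≠ 0) (hs : 0 < a * s + b) :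
    eqD (logSpiral a b) (fun _ => 0) (eqK (logSpiral a b) (fun _ => 0)) s = 0 := by
  have heq : eqK (logSpiral a b) (fun _ => 0) =ᶠ[nhds s] fun _ => a :=
    (eventually_affine_pos hs).mono fun t ht => eqK_logSpiral ha ht
  rw [eqD, heq.deriv_eq, deriv_const, smul_zero]

/-- A curve in the plane `z = 0` has vanishing torsion. -/
lemma tors_planar (y : ℝ → ℝ) (s : ℝ) : tors y (fun _ => 0) s = 0 := by
  simp [tors]

lemma eqT_planar (y : ℝ → ℝ) : eqT y (fun _ => 0) = fun _ => 0 := by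
  funext s
  rw [eqT, tors_planar, mul_zero]

lemma eqD_eqT_planar (y : ℝ → ℝ) (s : ℝ) :
    eqD y (fun _ => 0) (eqT y (fun _ => 0)) s = 0 := by
  rw [eqD, eqT_planar, deriv_const, smul_zero]

/-- the equiform timelike isotropic logarithmic spiral of Example 5 is
admissible with `κ(s) = 1/(as+b)`, `τ ≡ 0`, `𝒦 ≡ a`, `𝒯 ≡ 0`; it satisfies the equiform
AW(2) and AW(3) conditions but not the AW(1) condition, since `2𝒦² + 𝒯² − 𝒦° = 2a² ≠ 0`. -/
theorem pg_example5_log_spiral (a b : ℝ) (ha : a ≠ 0) :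
    (∀ s ∈ {s : ℝ | 0 < a * s + b},
      (deriv (deriv (fun t => (a * t + b) * (Real.log (a * t + b) - 1) / a ^ 2)) s) ^ 2 -
        (deriv (deriv (fun _ : ℝ => (0 : ℝ))) s) ^ 2 ≠ 0) ∧
    (∀ s ∈ {s : ℝ | 0 < a * s + b},
      curv (fun t => (a * t + b) * (Real.log (a * t + b) - 1) / a ^ 2)
        (fun _ => (0 : ℝ)) s = 1 / (a * s + b)) ∧
    (∀ s ∈ {s : ℝ | 0 < a * s + b},
      tors (fun t => (a * t + b) * (Real.log (a * t + b) - 1) / a ^ 2)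
        (fun _ => (0 : ℝ)) s = 0) ∧
    (∀ s ∈ {s : ℝ | 0 < a * s + b},
      eqK (fun t => (a * t + b) * (Real.log (a * t + b) - 1) / a ^ 2)
        (fun _ => (0 : ℝ)) s = a) ∧
    (∀ s ∈ {s : ℝ | 0 < a * s + b},
      eqT (fun t => (a * t + b) * (Real.log (a * t + b) - 1) / a ^ 2)
        (fun _ => (0 : ℝ)) s = 0) ∧
    (∀ s ∈ {s : ℝ | 0 < a * s + b},
      (eqK (fun t => (a * t + b) * (Real.log (a * t + b) - 1) / a ^ 2)
          (fun _ => (0 : ℝ)) s) ^ 2 *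
        eqT (fun t => (a * t + b) * (Real.log (a * t + b) - 1) / a ^ 2)
          (fun _ => (0 : ℝ)) s -
        eqK (fun t => (a * t + b) * (Real.log (a * t + b) - 1) / a ^ 2)
          (fun _ => (0 : ℝ)) s *
        eqD (fun t => (a * t + b) * (Real.log (a * t + b) - 1) / a ^ 2) (fun _ => (0 : ℝ))
          (eqT (fun t => (a * t + b) * (Real.log (a * t + b) - 1) / a ^ 2)
            (fun _ => (0 : ℝ))) s +
        eqT (fun t => (a * t + b) * (Real.log (a * t + b) - 1) / a ^ 2)
          (fun _ => (0 : ℝ)) s *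
        eqD (fun t => (a * t + b) * (Real.log (a * t + b) - 1) / a ^ 2) (fun _ => (0 : ℝ))
          (eqK (fun t => (a * t + b) * (Real.log (a * t + b) - 1) / a ^ 2)
            (fun _ => (0 : ℝ))) s -
        (eqT (fun t => (a * t + b) * (Real.log (a * t + b) - 1) / a ^ 2)
          (fun _ => (0 : ℝ)) s) ^ 3 = 0) ∧
    (∀ s ∈ {s : ℝ | 0 < a * s + b},
      eqD (fun t => (a * t + b) * (Real.log (a * t + b) - 1) / a ^ 2) (fun _ => (0 : ℝ))
          (eqT (fun t => (a * t + b) * (Real.log (a * t + b) - 1) / a ^ 2)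
            (fun _ => (0 : ℝ))) s -
        3 * eqK (fun t => (a * t + b) * (Real.log (a * t + b) - 1) / a ^ 2)
            (fun _ => (0 : ℝ)) s *
          eqT (fun t => (a * t + b) * (Real.log (a * t + b) - 1) / a ^ 2)
            (fun _ => (0 : ℝ)) s = 0) ∧
    (∀ s ∈ {s : ℝ | 0 < a * s + b},
      2 * (eqK (fun t => (a * t + b) * (Real.log (a * t + b) - 1) / a ^ 2)
            (fun _ => (0 : ℝ)) s) ^ 2 +
        (eqT (fun t => (a * t + b) * (Real.log (a * t + b) - 1) / a ^ 2)
          (fun _ => (0 : ℝ)) s) ^ 2 -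
        eqD (fun t => (a * t + b) * (Real.log (a * t + b) - 1) / a ^ 2) (fun _ => (0 : ℝ))
          (eqK (fun t => (a * t + b) * (Real.log (a * t + b) - 1) / a ^ 2)
            (fun _ => (0 : ℝ))) s = 2 * a ^ 2 ∧ 2 * a ^ 2 ≠ 0) := by
  rw [show (fun t => (a * t + b) * (Real.log (a * t + b) - 1) / a ^ 2) = logSpiral a b from rfl]
  refine ⟨fun s hs => ?_, fun s hs => curv_logSpiral ha hs, fun s _ => tors_planar _ s,
    fun s hs => eqK_logSpiral ha hs, fun s _ => congrFun (eqT_planar _) s, fun s hs => ?_,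
    fun s hs => ?_, fun s hs => ⟨?_, by positivity⟩⟩
  · have hpos : 0 < a * s + b := hs
    rw [deriv_deriv_logSpiral ha hs]
    simp [hpos.ne']
  · rw [eqD_eqT_planar, eqT_planar]
    ring
  · rw [eqD_eqT_planar, eqT_planar]
    ring
  · rw [eqD_eqK_logSpiral ha hs, eqK_logSpiral ha hs, eqT_planar]
    ring
end
end
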